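/- arXiv:math/0401254 — 3 statements merged into one kernel-verified Lean document; each statement's English description precedes it below -/
import Mathlib

section
/- Under the substitution φ, the image of F6 factors as a product of two tetrahedral Klein forms: φ(F6) = −(13/16)·t1·t2 in ℂ[z0,z1,z2,z3]. -/
/-!
The form `F6` is a cubic form in the squares `A = x0²`, `B = x1²`, `C = x2²`, `D = x3²`. Modulo the
quadric `A + B + C + D`, which `phi` sends to `0`, this cubic equals `-13 (A + B)(A + C)(A + D)`
(`cubic_eq_of_sum_eq_zero`). Under `phi` each of the three factors splits as a form in `z0, z1`
times a form in `z2, z3`: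

* `A + B` becomes `(z0 z1)(z2 z3)`,
* `A + C` becomes `(z0² + z1²)(z2² + z3²) / 4`,
* `A + D` becomes `(z0² - z1²)(z2² - z3²) / 4`,

and the product of the three is `t1 t2 / 16`.
-/

set_option maxHeartbeats 2000000

open MvPolynomial Matrix

noncomputable def phi : MvPolynomial (Fin 4) ℂ →ₐ[ℂ] MvPolynomial (Fin 4) ℂ :=
  aeval ![C ((1:ℂ)/2) * (X 0 * X 2 + X 1 * X 3),
         C ((1:ℂ)/(2*Complex.I)) * (X 0 * X 2 - X 1 * X 3),
         C ((1:ℂ)/2) * (X 0 * X 3 - X 1 * X 2),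
         C ((1:ℂ)/(2*Complex.I)) * (X 0 * X 3 + X 1 * X 2)]

noncomputable def t1 : MvPolynomial (Fin 4) ℂ := X 0 * X 1 * (X 0^4 - X 1^4)
noncomputable def t2 : MvPolynomial (Fin 4) ℂ := X 2 * X 3 * (X 2^4 - X 3^4)
noncomputable def W1 : MvPolynomial (Fin 4) ℂ := X 0^8 + C (14:ℂ) * X 0^4 * X 1^4 + X 1^8
noncomputable def W2 : MvPolynomial (Fin 4) ℂ := X 2^8 + C (14:ℂ) * X 2^4 * X 3^4 + X 3^8
noncomputable def chi1 : MvPolynomial (Fin 4) ℂ :=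
  X 0^12 - C (33:ℂ) * (X 0^8 * X 1^4 + X 0^4 * X 1^8) + X 1^12
noncomputable def chi2 : MvPolynomial (Fin 4) ℂ :=
  X 2^12 - C (33:ℂ) * (X 2^8 * X 3^4 + X 2^4 * X 3^8) + X 3^12

noncomputable def F6 : MvPolynomial (Fin 4) ℂ :=
  X 0^6 + X 1^6 + X 2^6 + X 3^6 +
  C (5:ℂ) * (X 0^2 * X 1^2 * (X 0^2 + X 1^2)) +
  C (5:ℂ) * (X 1^2 * X 3^2 * (X 1^2 + X 3^2)) +
  C (5:ℂ) * (X 1^2 * X 2^2 * (X 1^2 + X 2^2)) +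
  C (6:ℂ) * (X 0^2 * X 2^2 * (X 0^2 + X 2^2)) +
  C (6:ℂ) * (X 0^2 * X 3^2 * (X 0^2 + X 3^2)) +
  C (6:ℂ) * (X 2^2 * X 3^2 * (X 2^2 + X 3^2)) +
  C (2:ℂ) * (X 0^2 * X 2^2 * X 3^2)

/-- The cubic form underlying `F6`, on the hyperplane `a + b + c + d = 0`. -/
theorem cubic_eq_of_sum_eq_zero {R : Type*} [CommRing R] (a b c d : R) (h : a + b + c + d = 0) :
    a ^ 3 + b ^ 3 + c ^ 3 + d ^ 3 + 5 * (a * b * (a + b)) + 5 * (b * d * (b + d)) +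
      5 * (b * c * (b + c)) + 6 * (a * c * (a + c)) + 6 * (a * d * (a + d)) +
      6 * (c * d * (c + d)) + 2 * (a * c * d) = -13 * ((a + b) * (a + c) * (a + d)) := by
  obtain rfl : d = -(a + b + c) := by linear_combination h
  ring

theorem C_half_sq : (C ((1 : ℂ) / 2) : MvPolynomial (Fin 4) ℂ) ^ 2 = C (1 / 4) := by
  rw [← C_pow]; norm_num

theorem C_half_inv_I_sq :
    (C ((1 : ℂ) / (2 * Complex.I)) : MvPolynomial (Fin 4) ℂ) ^ 2 = -C (1 / 4) := by
  rw [← C_pow, ← C_neg, div_pow, mul_pow, Complex.I_sq]; norm_num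

theorem phi_X0_sq : phi (X 0) ^ 2 = C (1 / 4) * (X 0 * X 2 + X 1 * X 3) ^ 2 := by
  rw [← C_half_sq, ← mul_pow]; simp [phi]

theorem phi_X1_sq : phi (X 1) ^ 2 = -C (1 / 4) * (X 0 * X 2 - X 1 * X 3) ^ 2 := by
  rw [← C_half_inv_I_sq, ← mul_pow]; simp [phi]

theorem phi_X2_sq : phi (X 2) ^ 2 = C (1 / 4) * (X 0 * X 3 - X 1 * X 2) ^ 2 := by
  rw [← C_half_sq, ← mul_pow]; simp [phi]

theorem phi_X3_sq : phi (X 3) ^ 2 = -C (1 / 4) * (X 0 * X 3 + X 1 * X 2) ^ 2 := by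
  rw [← C_half_inv_I_sq, ← mul_pow]; simp [phi]

/-- `phi` kills the quadric `x0² + x1² + x2² + x3²`. -/
theorem phi_quadric : phi (X 0) ^ 2 + phi (X 1) ^ 2 + phi (X 2) ^ 2 + phi (X 3) ^ 2 = 0 := by
  rw [phi_X0_sq, phi_X1_sq, phi_X2_sq, phi_X3_sq]; ring

theorem phi_F6 : phi F6 = C (-(13/16) : ℂ) * t1 * t2 := by
  have hF : phi F6 = -13 * ((phi (X 0) ^ 2 + phi (X 1) ^ 2) * (phi (X 0) ^ 2 + phi (X 2) ^ 2) *
      (phi (X 0) ^ 2 + phi (X 3) ^ 2)) := by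
    rw [← cubic_eq_of_sum_eq_zero _ _ _ _ phi_quadric]
    simp only [F6, map_add, map_mul, map_pow, map_ofNat]
    ring
  have h01 : phi (X 0) ^ 2 + phi (X 1) ^ 2 = 4 * C (1 / 4) * (X 0 * X 1 * (X 2 * X 3)) := by
    rw [phi_X0_sq, phi_X1_sq]; ring
  have h02 : phi (X 0) ^ 2 + phi (X 2) ^ 2 =
      C (1 / 4) * ((X 0 ^ 2 + X 1 ^ 2) * (X 2 ^ 2 + X 3 ^ 2)) := by
    rw [phi_X0_sq, phi_X2_sq]; ring
  have h03 : phi (X 0) ^ 2 + phi (X 3) ^ 2 =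
      C (1 / 4) * ((X 0 ^ 2 - X 1 ^ 2) * (X 2 ^ 2 - X 3 ^ 2)) := by
    rw [phi_X0_sq, phi_X3_sq]; ring
  have hc : (C (-(13 / 16)) : MvPolynomial (Fin 4) ℂ) = -13 * 4 * C (1 / 4) ^ 3 := by
    rw [← map_ofNat (C : ℂ →+* MvPolynomial (Fin 4) ℂ) 13,
      ← map_ofNat (C : ℂ →+* MvPolynomial (Fin 4) ℂ) 4, ← C_neg, ← C_pow, ← C_mul, ← C_mul]
    norm_num
  rw [hF, h01, h02, h03, hc, t1, t2]
  ring
end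

section
/- Under the substitution φ, the image of F8 factors as a product of two octahedral Klein forms: φ(F8) = (3/64)·W1·W2 in ℂ[z0,z1,z2,z3]. -/
/-!
The identity is one between polynomials over the infinite field `ℂ`, so it may be checked at every
point `z : Fin 4 → ℂ`. There it becomes an identity between complex numbers. The form `F8` involves
only even powers of each variable, so the factors `1 / (2i)` in the images of `X 1` and `X 3` enter
only through `(1 / (2i)) ^ 2 = -1 / 4`. Once the squares are substituted, no `i` is left, and
expanding both sides over `ℚ` (`octic_eq`) completes the proof.
-/

set_option maxHeartbeats 2000000

open MvPolynomial Matrix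

noncomputable def F8a : MvPolynomial (Fin 4) ℂ :=
  X 0^8 +
  X 1^8 +
  X 2^8 +
  X 3^8

noncomputable def F8b : MvPolynomial (Fin 4) ℂ :=
  X 0^6 * X 1^2 +
  X 0^6 * X 2^2 +
  X 0^6 * X 3^2 +
  X 1^6 * X 0^2 +
  X 1^6 * X 2^2 +
  X 1^6 * X 3^2 +
  X 2^6 * X 0^2 +
  X 2^6 * X 1^2 +
  X 2^6 * X 3^2 +
  X 3^6 * X 0^2 +
  X 3^6 * X 1^2 +
  X 3^6 * X 2^2

noncomputable def F8c : MvPolynomial (Fin 4) ℂ :=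
  X 0^4 * X 1^4 +
  X 0^4 * X 2^4 +
  X 0^4 * X 3^4 +
  X 1^4 * X 2^4 +
  X 1^4 * X 3^4 +
  X 2^4 * X 3^4

noncomputable def F8d : MvPolynomial (Fin 4) ℂ :=
  X 0^4 * X 1^2 * X 2^2 +
  X 0^4 * X 1^2 * X 3^2 +
  X 0^4 * X 2^2 * X 3^2 +
  X 1^4 * X 0^2 * X 2^2 +
  X 1^4 * X 0^2 * X 3^2 +
  X 1^4 * X 2^2 * X 3^2 +
  X 2^4 * X 0^2 * X 1^2 +
  X 2^4 * X 0^2 * X 3^2 +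
  X 2^4 * X 1^2 * X 3^2 +
  X 3^4 * X 0^2 * X 1^2 +
  X 3^4 * X 0^2 * X 2^2 +
  X 3^4 * X 1^2 * X 2^2

noncomputable def F8e : MvPolynomial (Fin 4) ℂ :=
  X 0^2 * X 1^2 * X 2^2 * X 3^2

noncomputable def F8 : MvPolynomial (Fin 4) ℂ :=
  C (3:ℂ) * F8a + C (12:ℂ) * F8b + C (30:ℂ) * F8c +
  C (24:ℂ) * F8d + C (144:ℂ) * F8e

/-- The octic form `F8`, written as a quartic in the squares `u, v, w, t` of its four variables. -/
def octic (u v w t : ℂ) : ℂ :=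
  3 * (u^4 + v^4 + w^4 + t^4) +
  12 * (u^3 * (v + w + t) + v^3 * (u + w + t) + w^3 * (u + v + t) + t^3 * (u + v + w)) +
  30 * (u^2 * v^2 + u^2 * w^2 + u^2 * t^2 + v^2 * w^2 + v^2 * t^2 + w^2 * t^2) +
  24 * (u^2 * (v * w + v * t + w * t) + v^2 * (u * w + u * t + w * t) +
    w^2 * (u * v + u * t + v * t) + t^2 * (u * v + u * w + v * w)) +
  144 * (u * v * w * t)

/-- The factorization at a point, with the squares of the four substituted values as arguments:
the signs in the second and fourth come from `i ^ 2 = -1`. -/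
lemma octic_eq (a b c d : ℂ) :
    octic ((a * c + b * d)^2 / 4) (-(a * c - b * d)^2 / 4)
        ((a * d - b * c)^2 / 4) (-(a * d + b * c)^2 / 4) =
      3 / 64 * (a^8 + 14 * a^4 * b^4 + b^8) * (c^8 + 14 * c^4 * d^4 + d^8) := by
  unfold octic
  ring

lemma eval_F8 (x : Fin 4 → ℂ) :
    eval x F8 = octic (x 0 ^ 2) (x 1 ^ 2) (x 2 ^ 2) (x 3 ^ 2) := by
  simp only [F8, F8a, F8b, F8c, F8d, F8e, octic, map_add, map_mul, map_pow, eval_X, eval_C]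
  ring

lemma eval_phi (z : Fin 4 → ℂ) (p : MvPolynomial (Fin 4) ℂ) :
    eval z (phi p) = eval (fun i => eval z (phi (X i))) p := by
  induction p using MvPolynomial.induction_on with
  | C a => simp [phi]
  | add p q hp hq => simp only [map_add, hp, hq]
  | mul_X p i hp => simp only [map_mul, hp, eval_X]

lemma inv_two_I_mul_sq (y : ℂ) : (1 / (2 * Complex.I) * y)^2 = -y^2 / 4 := by
  rw [mul_pow, div_pow, mul_pow, Complex.I_sq]
  ring

lemma half_mul_sq (y : ℂ) : (1 / 2 * y)^2 = y^2 / 4 := by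
  ring

theorem phi_F8 : phi F8 = C ((3/64) : ℂ) * W1 * W2 := by
  refine MvPolynomial.funext fun z => ?_
  rw [eval_phi, eval_F8]
  have h0 : eval z (phi (X 0)) = 1 / 2 * (z 0 * z 2 + z 1 * z 3) := by simp [phi]
  have h1 : eval z (phi (X 1)) = 1 / (2 * Complex.I) * (z 0 * z 2 - z 1 * z 3) := by simp [phi]
  have h2 : eval z (phi (X 2)) = 1 / 2 * (z 0 * z 3 - z 1 * z 2) := by simp [phi]
  have h3 : eval z (phi (X 3)) = 1 / (2 * Complex.I) * (z 0 * z 3 + z 1 * z 2) := by simp [phi]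
  rw [h0, h1, h2, h3, half_mul_sq, half_mul_sq, inv_two_I_mul_sq, inv_two_I_mul_sq, octic_eq]
  simp only [W1, W2, map_add, map_mul, map_pow, eval_X, eval_C]
end

section
/- The quadric q does not divide the polynomial F12 in ℝ[x0,x1,x2,x3]. -/
set_option maxHeartbeats 2000000

open MvPolynomial Matrix

noncomputable def qpoly : MvPolynomial (Fin 4) ℝ :=
  X 0^2 + X 1^2 + X 2^2 + X 3^2

noncomputable def F12a : MvPolynomial (Fin 4) ℝ :=
  X 0^12 +
  X 1^12 +
  X 2^12 +
  X 3^12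

noncomputable def F12b : MvPolynomial (Fin 4) ℝ :=
  X 0^10 * X 1^2 +
  X 0^10 * X 2^2 +
  X 0^10 * X 3^2 +
  X 1^10 * X 0^2 +
  X 1^10 * X 2^2 +
  X 1^10 * X 3^2 +
  X 2^10 * X 0^2 +
  X 2^10 * X 1^2 +
  X 2^10 * X 3^2 +
  X 3^10 * X 0^2 +
  X 3^10 * X 1^2 +
  X 3^10 * X 2^2

noncomputable def F12c : MvPolynomial (Fin 4) ℝ :=
  X 0^8 * X 1^4 +
  X 0^8 * X 2^4 +
  X 0^8 * X 3^4 +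
  X 1^8 * X 0^4 +
  X 1^8 * X 2^4 +
  X 1^8 * X 3^4 +
  X 2^8 * X 0^4 +
  X 2^8 * X 1^4 +
  X 2^8 * X 3^4 +
  X 3^8 * X 0^4 +
  X 3^8 * X 1^4 +
  X 3^8 * X 2^4

noncomputable def F12d : MvPolynomial (Fin 4) ℝ :=
  X 0^6 * X 1^6 +
  X 0^6 * X 2^6 +
  X 0^6 * X 3^6 +
  X 1^6 * X 2^6 +
  X 1^6 * X 3^6 +
  X 2^6 * X 3^6

noncomputable def F12e : MvPolynomial (Fin 4) ℝ :=
  X 0^8 * X 1^2 * X 2^2 +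
  X 0^8 * X 1^2 * X 3^2 +
  X 0^8 * X 2^2 * X 3^2 +
  X 1^8 * X 0^2 * X 2^2 +
  X 1^8 * X 0^2 * X 3^2 +
  X 1^8 * X 2^2 * X 3^2 +
  X 2^8 * X 0^2 * X 1^2 +
  X 2^8 * X 0^2 * X 3^2 +
  X 2^8 * X 1^2 * X 3^2 +
  X 3^8 * X 0^2 * X 1^2 +
  X 3^8 * X 0^2 * X 2^2 +
  X 3^8 * X 1^2 * X 2^2

noncomputable def F12f : MvPolynomial (Fin 4) ℝ :=
  X 0^6 * X 1^4 * X 2^2 +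
  X 0^6 * X 1^4 * X 3^2 +
  X 0^6 * X 2^4 * X 1^2 +
  X 0^6 * X 2^4 * X 3^2 +
  X 0^6 * X 3^4 * X 1^2 +
  X 0^6 * X 3^4 * X 2^2 +
  X 1^6 * X 0^4 * X 2^2 +
  X 1^6 * X 0^4 * X 3^2 +
  X 1^6 * X 2^4 * X 0^2 +
  X 1^6 * X 2^4 * X 3^2 +
  X 1^6 * X 3^4 * X 0^2 +
  X 1^6 * X 3^4 * X 2^2 +
  X 2^6 * X 0^4 * X 1^2 +
  X 2^6 * X 0^4 * X 3^2 +
  X 2^6 * X 1^4 * X 0^2 +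
  X 2^6 * X 1^4 * X 3^2 +
  X 2^6 * X 3^4 * X 0^2 +
  X 2^6 * X 3^4 * X 1^2 +
  X 3^6 * X 0^4 * X 1^2 +
  X 3^6 * X 0^4 * X 2^2 +
  X 3^6 * X 1^4 * X 0^2 +
  X 3^6 * X 1^4 * X 2^2 +
  X 3^6 * X 2^4 * X 0^2 +
  X 3^6 * X 2^4 * X 1^2

noncomputable def F12g : MvPolynomial (Fin 4) ℝ :=
  X 0^4 * X 1^4 * X 2^4 +
  X 0^4 * X 1^4 * X 3^4 +
  X 0^4 * X 2^4 * X 3^4 +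
  X 1^4 * X 2^4 * X 3^4

noncomputable def F12h : MvPolynomial (Fin 4) ℝ :=
  X 0^6 * X 1^2 * X 2^2 * X 3^2 +
  X 1^6 * X 0^2 * X 2^2 * X 3^2 +
  X 2^6 * X 0^2 * X 1^2 * X 3^2 +
  X 3^6 * X 0^2 * X 1^2 * X 2^2

noncomputable def F12i : MvPolynomial (Fin 4) ℝ :=
  X 0^4 * X 1^4 * X 2^2 * X 3^2 +
  X 0^4 * X 2^4 * X 1^2 * X 3^2 +
  X 0^4 * X 3^4 * X 1^2 * X 2^2 +
  X 1^4 * X 2^4 * X 0^2 * X 3^2 +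
  X 1^4 * X 3^4 * X 0^2 * X 2^2 +
  X 2^4 * X 3^4 * X 0^2 * X 1^2

noncomputable def F12 : MvPolynomial (Fin 4) ℝ :=
  C (123/8:ℝ) * F12a + C (231/4:ℝ) * F12b + C (21/8:ℝ) * F12c -
  C (255/2:ℝ) * F12d + C (949/2:ℝ) * F12e + C (1839/2:ℝ) * F12f +
  C (6111/4:ℝ) * F12g + C (1809:ℝ) * F12h + C (7281/2:ℝ) * F12i

theorem q_not_dvd_F12 : ¬ (qpoly ∣ F12) := by
  intro h
  -- The complex point `(1, i, 0, 0)` lies on `q = 0`, while `F12` takes the value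
  -- `2 * (123/8) - 2 * (231/4) + 2 * (21/8) + 255/2 = 48` there.
  have h0 := map_dvd (aeval (![1, Complex.I, 0, 0] : Fin 4 → ℂ)) h
  have hq : aeval (![1, Complex.I, 0, 0] : Fin 4 → ℂ) qpoly = 0 := by
    simp [qpoly]
  have hF : aeval (![1, Complex.I, 0, 0] : Fin 4 → ℂ) F12 = 48 := by
    have h4 : Complex.I ^ 4 = 1 := Complex.I_pow_four
    have h6 : Complex.I ^ 6 = -1 := by
      rw [show Complex.I ^ 6 = Complex.I ^ 4 * Complex.I ^ 2 by ring, h4, Complex.I_sq, one_mul]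
    have h8 : Complex.I ^ 8 = 1 := by
      rw [show Complex.I ^ 8 = (Complex.I ^ 4) ^ 2 by ring, h4, one_pow]
    have h10 : Complex.I ^ 10 = -1 := by
      rw [show Complex.I ^ 10 = Complex.I ^ 6 * Complex.I ^ 4 by ring, h6, h4, mul_one]
    have h12 : Complex.I ^ 12 = 1 := by
      rw [show Complex.I ^ 12 = (Complex.I ^ 4) ^ 3 by ring, h4, one_pow]
    simp [F12, F12a, F12b, F12c, F12d, F12e, F12f, F12g, F12h, F12i, h4, h6, h8, h10, h12]
    norm_num
  rw [hq, hF, zero_dvd_iff] at h0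
  norm_num at h0
end
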